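/- Let L be a real symmetric positive semidefinite n×n matrix whose kernel is exactly the span of the all-ones vector 𝟙, let a ≠ b be indices, and set v = e_a − e_b. Let M be the Moore–Penrose pseudoinverse of L and M' the Moore–Penrose pseudoinverse of L + v·vᵀ. Then ∑_{1 ≤ x < y ≤ n} [(M_{xx} + M_{yy} − 2·M_{xy}) − (M'_{xx} + M'_{yy} − 2·M'_{xy})] = n·‖M·v‖² / (1 + vᵀ·M·v). -/

import Mathlib

open Matrix Finset

/-- `M` is the Moore–Penrose pseudoinverse of `L`. -/
def IsMoorePenroseInv {n : ℕ} (L M : Matrix (Fin n) (Fin n) ℝ) : Prop :=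
  L * M * L = L ∧ M * L * M = M ∧ (L * M)ᵀ = L * M ∧ (M * L)ᵀ = M * L

/-!
If `v` lies in the range of the symmetric matrix `L`, the Sherman–Morrison formula survives for
pseudoinverses: `(L + v vᵀ)† = L† - u uᵀ / (1 + vᵀ u)` with `u = L† v`, since multiplying this
candidate by `L + v vᵀ` on either side gives the same projection as multiplying `L†` by `L`.
Hence the resistance between `x` and `y` drops by exactly `(u x - u y)² / (1 + vᵀ u)`. As `L`
annihilates the all-ones vector, the entries of `u` sum to zero, and the squared differences add up
to `n ‖u‖²`.
-/

section PairSums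

variable {ι : Type*} [Fintype ι] [LinearOrder ι]

theorem sum_sum_eq_sum_diag_add_sum_lt {A : Type*} [AddCommMonoid A] (f : ι → ι → A) :
    ∑ i, ∑ j, f i j =
      ∑ i, f i i + ∑ p : ι × ι with p.1 < p.2, (f p.1 p.2 + f p.2 p.1) := by
  have swap_gt : ∑ p : ι × ι with p.2 < p.1, f p.1 p.2 =
      ∑ p : ι × ι with p.1 < p.2, f p.2 p.1 :=
    sum_equiv (Equiv.prodComm ι ι) (by simp) (by simp)
  have diag : ∑ p : ι × ι with p.1 = p.2, f p.1 p.2 = ∑ i, f i i := by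
    simp [sum_filter, Fintype.sum_prod_type]
  rw [sum_add_distrib, ← swap_gt, ← diag, ← Fintype.sum_prod_type']
  simp only [sum_filter, ← sum_add_distrib]
  refine sum_congr rfl fun p _ => ?_
  rcases lt_trichotomy p.1 p.2 with h | h | h
  · simp [h, h.ne, h.not_gt]
  · simp [h]
  · simp [h, h.ne', h.not_gt]

theorem sum_lt_sub_sq {R : Type*} [CommRing R] (u : ι → R) :
    ∑ p : ι × ι with p.1 < p.2, (u p.1 - u p.2) ^ 2 =
      Fintype.card ι * ∑ i, u i ^ 2 - (∑ i, u i) ^ 2 := by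
  calc ∑ p : ι × ι with p.1 < p.2, (u p.1 - u p.2) ^ 2
      = ∑ i, (u i ^ 2 - u i * u i) + ∑ p : ι × ι with p.1 < p.2,
          ((u p.1 ^ 2 - u p.1 * u p.2) + (u p.2 ^ 2 - u p.2 * u p.1)) := by
        have diag : ∑ i, (u i ^ 2 - u i * u i) = 0 := sum_eq_zero fun i _ => by ring
        rw [diag, zero_add]
        exact sum_congr rfl fun p _ => by ring
    _ = ∑ i, ∑ j, (u i ^ 2 - u i * u j) :=
        (sum_sum_eq_sum_diag_add_sum_lt fun i j => u i ^ 2 - u i * u j).symm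
    _ = Fintype.card ι * ∑ i, u i ^ 2 - (∑ i, u i) ^ 2 := by
        simp only [sum_sub_distrib, sum_const, card_univ, nsmul_eq_mul, ← mul_sum,
          sq (∑ i, u i), sum_mul]

end PairSums

section ShermanMorrison

variable {m K : Type*} [Fintype m] [Field K] {L M : Matrix m m K} {v w : m → K}

/-- The Sherman–Morrison expression `M - M v wᵀ M / (1 + wᵀ M v)`, which corrects an inverse or
pseudoinverse `M` of a matrix to one of its rank-one update by `v wᵀ`. It is meaningful only if
`1 + wᵀ M v ≠ 0`; otherwise the convention `0⁻¹ = 0` makes it `M`. -/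
def shermanMorrison (M : Matrix m m K) (v w : m → K) : Matrix m m K :=
  M - (1 + w ⬝ᵥ M *ᵥ v)⁻¹ • vecMulVec (M *ᵥ v) (w ᵥ* M)

theorem transpose_shermanMorrison (M : Matrix m m K) (v w : m → K) :
    (shermanMorrison M v w)ᵀ = shermanMorrison Mᵀ w v := by
  simp only [shermanMorrison, transpose_sub, transpose_smul, transpose_vecMulVec,
    mulVec_transpose, vecMul_transpose, dotProduct_mulVec, dotProduct_comm]

theorem add_vecMulVec_mul_shermanMorrison (hv : (L * M) *ᵥ v = v)
    (hd : 1 + w ⬝ᵥ M *ᵥ v ≠ 0) :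
    (L + vecMulVec v w) * shermanMorrison M v w = L * M := by
  set r := w ⬝ᵥ M *ᵥ v
  set X := vecMulVec v (w ᵥ* M)
  calc _ = L * M - (1 + r)⁻¹ • X + (X - (1 + r)⁻¹ • r • X) := by
        rw [shermanMorrison, Matrix.add_mul, Matrix.mul_sub, Matrix.mul_sub, Matrix.mul_smul,
          Matrix.mul_smul, mul_vecMulVec, mulVec_mulVec, hv, vecMulVec_mul,
          vecMulVec_mul_vecMulVec, vecMulVec_smul]
    _ = L * M + X - ((1 + r)⁻¹ * (1 + r)) • X := by module
    _ = L * M := by rw [inv_mul_cancel₀ hd, one_smul, add_sub_cancel_right]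

theorem shermanMorrison_mul_add_vecMulVec (hw : w ᵥ* (M * L) = w)
    (hd : 1 + w ⬝ᵥ M *ᵥ v ≠ 0) :
    shermanMorrison M v w * (L + vecMulVec v w) = M * L := by
  have hw_transpose : (Lᵀ * Mᵀ) *ᵥ w = w := by rw [← transpose_mul, mulVec_transpose, hw]
  have hd_transpose : 1 + v ⬝ᵥ Mᵀ *ᵥ w ≠ 0 := by
    rwa [dotProduct_mulVec, vecMul_transpose, dotProduct_comm]
  apply transpose_injective
  simpa only [transpose_mul, transpose_add, transpose_vecMulVec, transpose_shermanMorrison]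
    using add_vecMulVec_mul_shermanMorrison hw_transpose hd_transpose

end ShermanMorrison

namespace IsMoorePenroseInv

variable {n : ℕ} {L M N : Matrix (Fin n) (Fin n) ℝ} {v w : Fin n → ℝ}

theorem mul_eq_mul (hM : IsMoorePenroseInv L M) (hN : IsMoorePenroseInv L N) :
    L * M = L * N := by
  obtain ⟨hLML, -, hLM, -⟩ := hM
  obtain ⟨hLNL, -, hLN, -⟩ := hN
  calc L * M = (L * M)ᵀ := hLM.symm
    _ = (L * N * (L * M))ᵀ := by rw [← Matrix.mul_assoc (L * N), hLNL]
    _ = L * M * (L * N) := by rw [transpose_mul, hLM, hLN]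
    _ = L * N := by rw [← Matrix.mul_assoc (L * M), hLML]

protected theorem transpose (hM : IsMoorePenroseInv L M) : IsMoorePenroseInv Lᵀ Mᵀ := by
  obtain ⟨hLML, hMLM, hLM, hML⟩ := hM
  refine ⟨?_, ?_, ?_, ?_⟩
  · rw [← transpose_mul, ← transpose_mul, ← Matrix.mul_assoc, hLML]
  · rw [← transpose_mul, ← transpose_mul, ← Matrix.mul_assoc, hMLM]
  · rw [← transpose_mul, hML, hML]
  · rw [← transpose_mul, hLM, hLM]

protected theorem unique (hM : IsMoorePenroseInv L M) (hN : IsMoorePenroseInv L N) :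
    M = N := by
  have hML : M * L = N * L := by
    simpa only [← transpose_mul, transpose_inj] using hM.transpose.mul_eq_mul hN.transpose
  calc M = M * L * M := hM.2.1.symm
    _ = N * (L * M) := by rw [hML, Matrix.mul_assoc]
    _ = N * L * N := by rw [hM.mul_eq_mul hN, Matrix.mul_assoc]
    _ = N := hN.2.1

theorem isSymm (hM : IsMoorePenroseInv L M) (hL : L.IsSymm) : M.IsSymm := by
  have hMt := hM.transpose
  rw [hL.eq] at hMt
  exact hMt.unique hM

theorem posSemidef (hM : IsMoorePenroseInv L M) (hL : L.PosSemidef) : M.PosSemidef := by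
  have hMt : Mᴴ = M := hM.isSymm hL.isHermitian
  simpa only [hMt, hM.2.1] using hL.conjTranspose_mul_mul_same M

theorem vecMul_eq_zero (hM : IsMoorePenroseInv L M) (hv : L *ᵥ v = 0) : v ᵥ* M = 0 := by
  rw [← hM.2.1, ← hM.2.2.2, transpose_mul, Matrix.mul_assoc, ← vecMul_vecMul, vecMul_transpose,
    hv, zero_vecMul]

theorem mul_mulVec_of_mem_range (hM : IsMoorePenroseInv L M) (hv : v ∈ Set.range L.mulVec) :
    (L * M) *ᵥ v = v := by
  obtain ⟨x, rfl⟩ := hv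
  rw [mulVec_mulVec, hM.1]

theorem vecMul_mul_of_mem_range (hM : IsMoorePenroseInv L M) (hw : w ∈ Set.range Lᵀ.mulVec) :
    w ᵥ* (M * L) = w := by
  rw [← mulVec_transpose, transpose_mul, hM.transpose.mul_mulVec_of_mem_range hw]

-- The residual `v - L M v` lies in the kernel of `Lᵀ`, so it is orthogonal both to `v` and to the
-- range of `L`, hence to itself.
theorem mem_range_mulVec_of_dotProduct_eq_zero (hM : IsMoorePenroseInv L M)
    (hv : ∀ x, Lᵀ *ᵥ x = 0 → x ⬝ᵥ v = 0) : v ∈ Set.range L.mulVec := by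
  set r := v - L *ᵥ (M *ᵥ v) with hr
  have hLr : Lᵀ *ᵥ r = 0 := by
    rw [hr, mulVec_sub, mulVec_mulVec v L M, ← hM.2.2.1, mulVec_mulVec, ← transpose_mul, hM.1,
      sub_self]
  have hrr : r ⬝ᵥ r = 0 := by
    nth_rw 2 [hr]
    rw [dotProduct_sub, hv r hLr, dotProduct_mulVec, ← mulVec_transpose, hLr, zero_dotProduct,
      sub_zero]
  exact ⟨M *ᵥ v, (sub_eq_zero.1 (dotProduct_self_eq_zero.1 hrr)).symm⟩

theorem add_vecMulVec (hM : IsMoorePenroseInv L M) (hv : v ∈ Set.range L.mulVec)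
    (hw : w ∈ Set.range Lᵀ.mulVec) (hd : 1 + w ⬝ᵥ M *ᵥ v ≠ 0) :
    IsMoorePenroseInv (L + vecMulVec v w) (shermanMorrison M v w) := by
  have hLMv := hM.mul_mulVec_of_mem_range hv
  have mul_right := add_vecMulVec_mul_shermanMorrison hLMv hd
  have mul_left := shermanMorrison_mul_add_vecMulVec (hM.vecMul_mul_of_mem_range hw) hd
  obtain ⟨hLML, hMLM, hLM, hML⟩ := hM
  refine ⟨?_, ?_, ?_, ?_⟩
  · rw [mul_right, Matrix.mul_add, hLML, mul_vecMulVec, hLMv]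
  · rw [mul_left, shermanMorrison, Matrix.mul_sub, hMLM, Matrix.mul_smul, mul_vecMulVec,
      mulVec_mulVec, hMLM]
  · rw [mul_right, hLM]
  · rw [mul_left, hML]

end IsMoorePenroseInv

theorem gain_formula_general {n : ℕ} {L M M' : Matrix (Fin n) (Fin n) ℝ} {v : Fin n → ℝ}
    (hL : L.IsSymm) (hL_one : L *ᵥ 1 = 0) (hv : v ∈ Set.range L.mulVec)
    (hM : IsMoorePenroseInv L M) (hM' : IsMoorePenroseInv (L + vecMulVec v v) M')
    (hd : 1 + v ⬝ᵥ M *ᵥ v ≠ 0) :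
    ∑ p : Fin n × Fin n with p.1 < p.2,
        ((M p.1 p.1 + M p.2 p.2 - 2 * M p.1 p.2) -
          (M' p.1 p.1 + M' p.2 p.2 - 2 * M' p.1 p.2)) =
      (n : ℝ) * (∑ i, (M *ᵥ v) i ^ 2) / (1 + v ⬝ᵥ M *ᵥ v) := by
  set u := M *ᵥ v with hu
  have hvM : v ᵥ* M = u := by rw [← mulVec_transpose, hM.isSymm hL]
  have hM'_eq : M' = M - (1 + v ⬝ᵥ u)⁻¹ • vecMulVec u u := by
    rw [hM'.unique (hM.add_vecMulVec hv (hL.eq.symm ▸ hv) hd), shermanMorrison, hvM]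
  have hu_sum : ∑ i, u i = 0 := by
    rw [← one_dotProduct, hu, dotProduct_mulVec, hM.vecMul_eq_zero hL_one, zero_dotProduct]
  calc _ = ∑ p : Fin n × Fin n with p.1 < p.2, (u p.1 - u p.2) ^ 2 / (1 + v ⬝ᵥ u) := by
        refine sum_congr rfl fun p _ => ?_
        simp only [hM'_eq, Matrix.sub_apply, Matrix.smul_apply, vecMulVec_apply, smul_eq_mul]
        ring
    _ = n * (∑ i, u i ^ 2) / (1 + v ⬝ᵥ u) := by
        rw [← sum_div, sum_lt_sub_sq, hu_sum, Fintype.card_fin, sq 0, mul_zero, sub_zero]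

theorem gain_formula {n : ℕ}
    (L : Matrix (Fin n) (Fin n) ℝ) (hL : L.PosSemidef)
    (hker : ∀ x : Fin n → ℝ,
      L.mulVec x = 0 ↔ ∃ c : ℝ, x = c • (fun _ => (1 : ℝ)))
    (a b : Fin n) (hab : a ≠ b)
    (v : Fin n → ℝ) (hv : v = Pi.single a 1 - Pi.single b 1)
    (M M' : Matrix (Fin n) (Fin n) ℝ)
    (hM : IsMoorePenroseInv L M)
    (hM' : IsMoorePenroseInv (L + vecMulVec v v) M') :
    ∑ p ∈ Finset.univ.filter (fun p : Fin n × Fin n => p.1 < p.2),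
        ((M p.1 p.1 + M p.2 p.2 - 2 * M p.1 p.2) -
          (M' p.1 p.1 + M' p.2 p.2 - 2 * M' p.1 p.2)) =
      (n : ℝ) * (∑ i, (M.mulVec v i) ^ 2) / (1 + v ⬝ᵥ M.mulVec v) := by
  have hL_symm : L.IsSymm := hL.isHermitian
  have hv_range : v ∈ Set.range L.mulVec := by
    refine hM.mem_range_mulVec_of_dotProduct_eq_zero fun x hx => ?_
    obtain ⟨c, rfl⟩ := (hker x).1 (hL_symm.eq ▸ hx)
    simp [hv, dotProduct_sub]
  have hvMv : 0 ≤ v ⬝ᵥ M *ᵥ v := (hM.posSemidef hL).dotProduct_mulVec_nonneg v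
  exact gain_formula_general hL_symm ((hker 1).2 ⟨1, (one_smul ℝ _).symm⟩) hv_range hM hM'
    (by positivity)
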